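/- For all integers w, p0, p1, p2 and all nonnegative integers u, ℓ, one has G(w,u,ℓ;p0,p1,p2+1) = G(w,u,ℓ;p0,p1,p2) + q^{4p2+ℓ+2} G(w,u−1,ℓ;p0,p1,p2), where G at the second argument u−1 is interpreted as 0 when u = 0. -/

import Mathlib

open Finset

noncomputable section

/-- The field `ℚ(q)` of rational functions over `ℚ`. -/
abbrev F : Type := RatFunc ℚ

/-- The indeterminate `q`. -/
noncomputable def qq : F := RatFunc.X

/-- The quantum integer `[n]` with base `v`: `(v^n - v^(-n))/(v - v⁻¹)`. -/
noncomputable def qint (v : F) (n : ℤ) : F := (v ^ n - v ^ (-n)) / (v - v⁻¹)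

/-- The quantum factorial `[m]! = [1][2]⋯[m]` with base `v`. -/
noncomputable def qfact (v : F) (m : ℕ) : F := ∏ k ∈ range m, qint v ((k : ℤ) + 1)

/-- The quantum binomial coefficient `C_v(n,d) = [n][n-1]⋯[n-d+1]/[d]!` for `d ≥ 0`,
and `0` for `d < 0`. -/
noncomputable def qbinom (v : F) (n d : ℤ) : F :=
  if d < 0 then 0
  else (∏ k ∈ range d.toNat, qint v (n - (k : ℤ))) / qfact v d.toNat

/-- The function `G(w,u,ℓ;p0,p1,p2)` of [CLW, (5.1)]. -/
noncomputable def G (w : ℤ) (u ℓ : ℕ) (p0 p1 p2 : ℤ) : F :=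
  (-1 : F) ^ w * qq ^ ((u : ℤ) ^ 2 - w * (u : ℤ) + (ℓ : ℤ) * (u : ℤ)) *
  ((∑ c ∈ range (u + 1), ∑ e ∈ range (u + 1 - c), ∑ t ∈ range (ℓ + 1),
      (let r : ℕ := u - c - e;
       if Even ((t : ℤ) + w - (r : ℤ)) then
         qq ^ (-(t : ℤ) * ((ℓ : ℤ) + (u : ℤ) - 1) - (u : ℤ) * ((c : ℤ) + (e : ℤ)) + 2 * (c : ℤ)
               + (r : ℤ) * p0 + 2 * (c : ℤ) * p1 + 2 * (e : ℤ) * p2)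
           * qbinom qq (ℓ : ℤ) (t : ℤ) * qbinom qq (w + (t : ℤ) + p0) (r : ℤ)
           * qbinom (qq ^ 2) ((w + (t : ℤ) - (r : ℤ)) / 2 + p1) (c : ℤ)
           * qbinom (qq ^ 2) ((w + (t : ℤ) - (r : ℤ)) / 2 + p2) (e : ℤ)
       else 0))
  - (∑ c ∈ range (u + 1), ∑ e ∈ range (u + 1 - c), ∑ t ∈ range (ℓ + 1),
      (let r : ℕ := u - c - e;
       if ¬ Even ((t : ℤ) + w - (r : ℤ)) then
         qq ^ (-(t : ℤ) * ((ℓ : ℤ) + (u : ℤ) - 1) - ((u : ℤ) - 1) * ((c : ℤ) + (e : ℤ))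
               + (r : ℤ) * p0 + 2 * (c : ℤ) * p1 + 2 * (e : ℤ) * p2)
           * qbinom qq (ℓ : ℤ) (t : ℤ) * qbinom qq (w + (t : ℤ) + p0) (r : ℤ)
           * qbinom (qq ^ 2) (1 + (w + (t : ℤ) - (r : ℤ) - 1) / 2 + p1) (c : ℤ)
           * qbinom (qq ^ 2) ((w + (t : ℤ) - (r : ℤ) - 1) / 2 + p2) (e : ℤ)
       else 0)))

/-!
Passing from `p2` to `p2 + 1` only affects the factor `q^{2e p2} C_{q²}(m + p2, e)` of a summand,
where `m` is the half of `w + t - r`, rounded down. The `q`-Pascal rule replaces this factor by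
itself plus a multiple of `C_{q²}(m + p2, e - 1)`, and after the shift `e ↦ e + 1` the second term
belongs to `G` at `u - 1`. The power of `q` left over would depend on `t`, on `r` and on the parity
of `w + t - r`, but `2m` cancels exactly this dependence against that of the exponents in `G`: what
remains is `q^{4 p2 + w + 3 - 2u}` for every summand. Together with the quotient
`q^{2u - 1 - w + ℓ}` of the prefactors of `G` at `u` and at `u - 1` this is `q^{4 p2 + ℓ + 2}`.
-/

lemma qq_ne_zero : qq ≠ 0 :=
  RatFunc.X_ne_zero

lemma not_isOfFinOrder_of_transcendental {R A : Type*} [CommRing R] [Nontrivial R] [Ring A]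
    [Algebra R A] {x : A} (hx : Transcendental R x) : ¬IsOfFinOrder x := by
  rw [isOfFinOrder_iff_pow_eq_one]
  rintro ⟨n, hn, hxn⟩
  have hint : IsIntegral R (x ^ n) := hxn ▸ isIntegral_one
  exact hx (hint.of_pow hn).isAlgebraic

lemma not_isOfFinOrder_ratFunc_X (K : Type*) [Field K] : ¬IsOfFinOrder (RatFunc.X : RatFunc K) :=
  not_isOfFinOrder_of_transcendental RatFunc.transcendental_X

lemma not_isOfFinOrder_qq : ¬IsOfFinOrder qq :=
  not_isOfFinOrder_ratFunc_X ℚ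

section QuantumBinomial

variable {v : F}

lemma qint_ne_zero (hv₀ : v ≠ 0) (hv : ¬IsOfFinOrder v) {n : ℤ} (hn : n ≠ 0) :
    qint v n ≠ 0 := by
  have zpow_ne_zpow_neg : ∀ {m : ℤ}, m ≠ 0 → v ^ m ≠ v ^ (-m) := by
    intro m hm h
    refine hv (isOfFinOrder_iff_zpow_eq_one.mpr ⟨m + m, by omega, ?_⟩)
    rw [zpow_add₀ hv₀]
    nth_rewrite 1 [h]
    rw [← zpow_add₀ hv₀, neg_add_cancel, zpow_zero]
  refine div_ne_zero (sub_ne_zero.mpr (zpow_ne_zpow_neg hn)) (sub_ne_zero.mpr ?_)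
  simpa using zpow_ne_zpow_neg one_ne_zero

lemma qint_add (hv₀ : v ≠ 0) (a b : ℤ) :
    qint v (a + b) = v ^ (-b) * qint v a + v ^ a * qint v b := by
  simp only [qint, mul_div_assoc', ← add_div, mul_sub, ← zpow_add₀ hv₀]
  ring_nf

@[simp]
lemma qbinom_zero_right (v : F) (n : ℤ) : qbinom v n 0 = 1 := by
  simp [qbinom, qfact]

lemma qbinom_natCast (v : F) (n : ℤ) (d : ℕ) :
    qbinom v n d = (∏ k ∈ range d, qint v (n - k)) / qfact v d := by
  simp [qbinom]

lemma qfact_succ (v : F) (m : ℕ) : qfact v (m + 1) = qfact v m * qint v (m + 1) :=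
  prod_range_succ _ m

lemma qbinom_succ_right (v : F) (n : ℤ) (d : ℕ) :
    qbinom v n (d + 1) = qbinom v n d * (qint v (n - d) / qint v (d + 1)) := by
  rw [← Nat.cast_add_one, qbinom_natCast, qbinom_natCast, prod_range_succ, qfact_succ,
    mul_div_mul_comm, Nat.cast_add_one]

lemma qbinom_succ_succ_eq_mul (v : F) (n : ℤ) (d : ℕ) :
    qbinom v (n + 1) (d + 1) = qbinom v n d * (qint v (n + 1) / qint v (d + 1)) := by
  rw [← Nat.cast_add_one, qbinom_natCast, qbinom_natCast, prod_range_succ', qfact_succ,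
    mul_div_mul_comm, Nat.cast_add_one]
  simp only [Nat.cast_add, Nat.cast_one, add_sub_add_right_eq_sub, Nat.cast_zero, sub_zero]

lemma qbinom_succ_succ (hv₀ : v ≠ 0) (hv : ¬IsOfFinOrder v) (n : ℤ) (d : ℕ) :
    qbinom v (n + 1) (d + 1)
      = v ^ (-(d + 1) : ℤ) * qbinom v n (d + 1) + v ^ (n - d) * qbinom v n d := by
  have hd : qint v (d + 1) ≠ 0 := qint_ne_zero hv₀ hv (by omega)
  have hadd : qint v (n + 1)
      = v ^ (-(d + 1) : ℤ) * qint v (n - d) + v ^ (n - d) * qint v (d + 1) := by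
    rw [← qint_add hv₀]
    ring_nf
  rw [qbinom_succ_succ_eq_mul, qbinom_succ_right, hadd]
  field_simp

end QuantumBinomial

lemma qbinom_qq_sq_succ_succ (n : ℤ) (d : ℕ) :
    qbinom (qq ^ 2) (n + 1) (d + 1)
      = qq ^ (-2 * (d + 1) : ℤ) * qbinom (qq ^ 2) n (d + 1)
        + qq ^ (2 * (n - d)) * qbinom (qq ^ 2) n d := by
  have hsq : ¬IsOfFinOrder (qq ^ 2) := by
    simpa [isOfFinOrder_pow] using not_isOfFinOrder_qq
  have hzpow (k : ℤ) : (qq ^ 2) ^ k = qq ^ (2 * k) := by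
    rw [zpow_mul, zpow_ofNat]
  rw [qbinom_succ_succ (pow_ne_zero 2 qq_ne_zero) hsq, hzpow, hzpow, mul_neg, neg_mul]

lemma sum_range_sum_range_sub_succ {M : Type*} [AddCommMonoid M] (n : ℕ) (f : ℕ → ℕ → M) :
    ∑ c ∈ range (n + 1), ∑ e ∈ range (n + 1 - c), f c e
      = ∑ c ∈ range (n + 1), f c 0 + ∑ c ∈ range n, ∑ e ∈ range (n - c), f c (e + 1) := by
  have hrow : ∀ c ∈ range (n + 1), ∑ e ∈ range (n + 1 - c), f c e
      = f c 0 + ∑ e ∈ range (n - c), f c (e + 1) := by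
    intro c hc
    rw [Nat.succ_sub (mem_range_succ_iff.mp hc), sum_range_succ', add_comm]
  rw [sum_congr rfl hrow, sum_add_distrib, sum_range_succ (fun c => ∑ e ∈ range (n - c), _)]
  simp

/-- The exponent of `q` in the summand of `G` with indices `c`, `e`, `r`, `t`, in a form common to
both of its sums: `ε = 0` is the case of even, `ε = 1` that of odd `t + w - r`. -/
def parityExponent (ε : ℤ) (u ℓ : ℕ) (p0 p1 p2 : ℤ) (c e r t : ℕ) : ℤ :=
  -(t : ℤ) * (ℓ + u - 1) - (u - ε) * (c + e) + 2 * (1 - ε) * c + r * p0 + 2 * c * p1 + 2 * e * p2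

/-- The summand of `G` with indices `c`, `e`, `r`, `t`, with `ε` as in `parityExponent`. -/
def parityTerm (ε w : ℤ) (u ℓ : ℕ) (p0 p1 p2 : ℤ) (c e r t : ℕ) : F :=
  if Even ((t : ℤ) + w - r - ε) then
    qq ^ parityExponent ε u ℓ p0 p1 p2 c e r t
      * qbinom qq ℓ t * qbinom qq (w + t + p0) r
      * qbinom (qq ^ 2) (ε + (w + t - r - ε) / 2 + p1) c
      * qbinom (qq ^ 2) ((w + t - r - ε) / 2 + p2) e
  else 0

/-- The sum of `G` over even (`ε = 0`) or over odd (`ε = 1`) values of `t + w - r`. -/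
def paritySum (ε w : ℤ) (u ℓ : ℕ) (p0 p1 p2 : ℤ) : F :=
  ∑ c ∈ range (u + 1), ∑ e ∈ range (u + 1 - c), ∑ t ∈ range (ℓ + 1),
    parityTerm ε w u ℓ p0 p1 p2 c e (u - c - e) t

lemma G_eq_paritySum_sub_paritySum (w : ℤ) (u ℓ : ℕ) (p0 p1 p2 : ℤ) :
    G w u ℓ p0 p1 p2
      = (-1) ^ w * qq ^ ((u : ℤ) ^ 2 - w * u + ℓ * u)
        * (paritySum 0 w u ℓ p0 p1 p2 - paritySum 1 w u ℓ p0 p1 p2) := by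
  simp only [G, paritySum, parityTerm, parityExponent, Int.even_sub_one, sub_zero, sub_self,
    zero_add, mul_one, mul_zero, zero_mul, add_zero]

section Recursion

variable (ε w : ℤ) (ℓ : ℕ) (p0 p1 p2 : ℤ)

lemma parityTerm_zero_e (p2' : ℤ) (u c r t : ℕ) :
    parityTerm ε w u ℓ p0 p1 p2 c 0 r t = parityTerm ε w u ℓ p0 p1 p2' c 0 r t := by
  simp [parityTerm, parityExponent]

lemma parityTerm_succ_e {u c e r : ℕ} (hu : c + e + r = u) (t : ℕ) :
    parityTerm ε w (u + 1) ℓ p0 p1 (p2 + 1) c (e + 1) r t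
      = parityTerm ε w (u + 1) ℓ p0 p1 p2 c (e + 1) r t
        + qq ^ (4 * p2 + w + 1 - 2 * u) * parityTerm ε w u ℓ p0 p1 p2 c e r t := by
  unfold parityTerm
  split_ifs with heven
  · obtain ⟨m, hm⟩ := heven
    have hhalf : (w + t - r - ε) / 2 = m := by omega
    have hexp_same : qq ^ parityExponent ε (u + 1) ℓ p0 p1 (p2 + 1) c (e + 1) r t
          * qq ^ (-2 * (e + 1) : ℤ)
        = qq ^ parityExponent ε (u + 1) ℓ p0 p1 p2 c (e + 1) r t := by
      rw [← zpow_add₀ qq_ne_zero]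
      congr 1
      simp only [parityExponent, Nat.cast_add_one]
      ring
    have hexp_shift : qq ^ parityExponent ε (u + 1) ℓ p0 p1 (p2 + 1) c (e + 1) r t
          * qq ^ (2 * (m + p2 - e))
        = qq ^ (4 * p2 + w + 1 - 2 * u) * qq ^ parityExponent ε u ℓ p0 p1 p2 c e r t := by
      rw [← zpow_add₀ qq_ne_zero, ← zpow_add₀ qq_ne_zero]
      congr 1
      simp only [parityExponent, ← hu, Nat.cast_add, Nat.cast_one]
      linear_combination -hm
    rw [hhalf, ← add_assoc m, Nat.cast_add_one e, qbinom_qq_sq_succ_succ, ← hexp_same]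
    linear_combination qbinom qq ℓ t * qbinom qq (w + t + p0) r
      * qbinom (qq ^ 2) (ε + m + p1) c * qbinom (qq ^ 2) (m + p2) e * hexp_shift
  · simp

lemma paritySum_zero_u (p2' : ℤ) :
    paritySum ε w 0 ℓ p0 p1 p2 = paritySum ε w 0 ℓ p0 p1 p2' := by
  simp [paritySum, parityTerm_zero_e ε w ℓ p0 p1 p2 p2']

lemma paritySum_succ_u (u : ℕ) :
    paritySum ε w (u + 1) ℓ p0 p1 (p2 + 1)
      = paritySum ε w (u + 1) ℓ p0 p1 p2
        + qq ^ (4 * p2 + w + 1 - 2 * u) * paritySum ε w u ℓ p0 p1 p2 := by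
  have hterm : ∀ c ∈ range (u + 1), ∀ e ∈ range (u + 1 - c), ∀ t : ℕ,
      parityTerm ε w (u + 1) ℓ p0 p1 (p2 + 1) c (e + 1) (u + 1 - c - (e + 1)) t
        = parityTerm ε w (u + 1) ℓ p0 p1 p2 c (e + 1) (u + 1 - c - (e + 1)) t
          + qq ^ (4 * p2 + w + 1 - 2 * u) * parityTerm ε w u ℓ p0 p1 p2 c e (u - c - e) t := by
    intro c hc e he t
    rw [mem_range] at hc he
    rw [show u + 1 - c - (e + 1) = u - c - e by omega]
    exact parityTerm_succ_e ε w ℓ p0 p1 p2 (by omega) t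
  simp only [paritySum, sum_range_sum_range_sub_succ (u + 1), mul_sum]
  refine Eq.trans (congrArg₂ (· + ·) ?_ ?_) (add_assoc _ _ _).symm
  · simp only [parityTerm_zero_e ε w ℓ p0 p1 (p2 + 1) p2]
  · simp only [← sum_add_distrib]
    exact sum_congr rfl fun c hc => sum_congr rfl fun e he => sum_congr rfl fun t _ =>
      hterm c hc e he t

end Recursion

/-- Recursion in `p2`:
`G(w,u,ℓ;p0,p1,p2+1) = G(w,u,ℓ;p0,p1,p2) + q^{4p2+ℓ+2} G(w,u−1,ℓ;p0,p1,p2)`,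
where the term with second argument `u−1` is interpreted as `0` when `u = 0`. -/
theorem G_rec_p2 (w p0 p1 p2 : ℤ) (u ℓ : ℕ) :
    G w u ℓ p0 p1 (p2 + 1)
      = G w u ℓ p0 p1 p2
        + qq ^ (4 * p2 + (ℓ : ℤ) + 2) * (if u = 0 then 0 else G w (u - 1) ℓ p0 p1 p2) := by
  rcases u with _ | u
  · simp [G_eq_paritySum_sub_paritySum, paritySum_zero_u _ _ _ _ _ (p2 + 1) p2]
  have hexp : qq ^ (((u + 1 : ℕ) : ℤ) ^ 2 - w * (u + 1 : ℕ) + ℓ * (u + 1 : ℕ))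
        * qq ^ (4 * p2 + w + 1 - 2 * u)
      = qq ^ (4 * p2 + (ℓ : ℤ) + 2) * qq ^ ((u : ℤ) ^ 2 - w * u + ℓ * u) := by
    rw [← zpow_add₀ qq_ne_zero, ← zpow_add₀ qq_ne_zero]
    push_cast
    ring_nf
  rw [if_neg u.succ_ne_zero, Nat.add_sub_cancel]
  simp only [G_eq_paritySum_sub_paritySum, paritySum_succ_u]
  linear_combination (-1) ^ w * (paritySum 0 w u ℓ p0 p1 p2 - paritySum 1 w u ℓ p0 p1 p2) * hexp

end
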